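/- Let N be a near path, i.e., a finite graph that is either a path or is obtained from a path by adding one new vertex adjacent to exactly one vertex of the path. Then the class K({N}) of all finite graphs admitting no injective graph homomorphism from N has the weak amalgamation property. -/

import Mathlib

open SimpleGraph

/-- `A` is contained in `G`: there is an injective graph homomorphism from `A` to `G`. -/
def Contains {V W : Type} (A : SimpleGraph V) (G : SimpleGraph W) : Prop :=
  ∃ f : A →g G, Function.Injective f

/-- The class of finite graphs satisfying `P` has the weak amalgamation property (WAP):
for every finite `A` with `P A` there are a finite `A'` with `P A'` and a graph embedding
`i : A ↪g A'` such that any two finite extensions `B`, `C` of `A'` in the class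
amalgamate over (the image of) `A`. -/
def GraphWAP (P : ∀ α : Type, SimpleGraph α → Prop) : Prop :=
  ∀ (α : Type) [Fintype α], ∀ A : SimpleGraph α, P α A →
    ∃ (β : Type) (_ : Fintype β) (A' : SimpleGraph β) (i : A ↪g A'), P β A' ∧
      ∀ (γ : Type) [Fintype γ], ∀ B : SimpleGraph γ, P γ B →
        ∀ (δ : Type) [Fintype δ], ∀ C : SimpleGraph δ, P δ C →
          ∀ (f : A' ↪g B) (g : A' ↪g C),
            ∃ (ε : Type) (_ : Fintype ε) (D : SimpleGraph ε), P ε D ∧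
              ∃ (f' : B ↪g D) (g' : C ↪g D),
                ∀ a : α, f' (f (i a)) = g' (g (i a))

/-- The near path obtained from the path graph on `m` vertices by adding one new vertex
(`Sum.inr ()`) adjacent exactly to the vertex `k` of the path. -/
def nearPath (m : ℕ) (k : Fin m) : SimpleGraph (Fin m ⊕ Unit) :=
  SimpleGraph.fromRel fun a b =>
    (∃ i j : Fin m, a = Sum.inl i ∧ b = Sum.inl j ∧ (i : ℕ) + 1 = (j : ℕ)) ∨
    (a = Sum.inl k ∧ b = Sum.inr ())

/-!
If `G` is `N`-free, the midpoint of a long path of `G` has degree two, so away from its ends a long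
path is a thread: a component containing a very long path looks like a line there. Joining two
copies of `G` at every leaf that ends a long thread creates no copy of `N`, since a connected `N`
reaching such a joint lies within a thread and `G` already contains a long path. In the double
every vertex that is joined to the middle of a long path through vertices of degree at most two has
two neighbours. Hence in an `N`-free extension of the double the initial vertices of a long path
from that middle, which have degree two, never leave the double; so the lengths of these paths are
bounded, uniformly in all further extensions.

Treating the vertices of `A` in turn gives an extension `A'` such that in every extension of
`A'` the components meeting `A` have bounded treedepth. Labelled graphs of bounded treedepth are
well-quasi-ordered by induced embeddings. If no extension of `A'` were an amalgamation base over
`A`, one could build a chain of extensions with a pair that does not amalgamate at each stage; but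
two stages `i < j` would have comparable cores, and then gluing along the smaller core amalgamates
them, because `N`-freeness is preserved by disjoint unions.
-/

/-! ### Copies -/

section Copies

variable {V W W' : Type*} {N : SimpleGraph V} {G : SimpleGraph W} {H : SimpleGraph W'}

theorem contains_iff_isContained {V W : Type} {A : SimpleGraph V} {G : SimpleGraph W} :
    Contains A G ↔ A ⊑ G :=
  ⟨fun ⟨f, hf⟩ => ⟨⟨f, hf⟩⟩, fun ⟨f⟩ => ⟨f.toHom, f.injective⟩⟩

theorem isContained_of_forall_mem_range (f : G ↪g H) (φ : Copy N H)
    (hφ : ∀ x, φ x ∈ Set.range f) : N ⊑ G := by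
  choose g hg using hφ
  refine ⟨⟨⟨g, fun {x y} hxy => ?_⟩, fun x y hxy => φ.injective ?_⟩⟩
  · rw [← f.map_adj_iff, hg, hg]
    exact φ.toHom.map_adj hxy
  · exact (hg x).symm.trans ((congrArg f hxy).trans (hg y))

theorem eq_of_preconnected_of_forall_adj {β : Type*} (hN : N.Preconnected) {f : V → β}
    (hf : ∀ x y, N.Adj x y → f x = f y) (x y : V) : f x = f y := by
  obtain ⟨w⟩ := hN x y
  induction w with
  | nil => rfl
  | cons h _ ih => exact (hf _ _ h).trans ih

theorem free_sum (hN : N.Preconnected) (hG : N.Free G) (hH : N.Free H) : N.Free (G ⊕g H) := by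
  rintro ⟨φ⟩
  have same_side : ∀ x y, (φ x).isLeft = (φ y).isLeft :=
    eq_of_preconnected_of_forall_adj hN fun x y hxy => by
      have := φ.toHom.map_adj hxy
      simp only [Copy.toHom_apply] at this
      cases hx : φ x <;> cases hy : φ y <;> simp_all [SimpleGraph.sum]
  by_cases hleft : ∃ x, (φ x).isLeft
  · obtain ⟨x, hx⟩ := hleft
    refine hG (isContained_of_forall_mem_range Embedding.sumInl φ fun y => ?_)
    obtain ⟨w, hw⟩ := Sum.isLeft_iff.1 ((same_side y x).trans hx)
    exact ⟨w, hw.symm⟩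
  · refine hH (isContained_of_forall_mem_range Embedding.sumInr φ fun y => ?_)
    obtain ⟨w, hw⟩ := Sum.isRight_iff.1 (Sum.not_isLeft.1 fun hy => hleft ⟨y, hy⟩)
    exact ⟨w, hw.symm⟩

theorem exists_embedding_sum_of_induce {s : Set W} (hs : ∀ x y, G.Adj x y → (x ∈ s ↔ y ∈ s))
    (ψ : G.induce s ↪g H) :
    ∃ g : G ↪g H ⊕g G, ∀ x (hx : x ∈ s), g x = Sum.inl (ψ ⟨x, hx⟩) := by
  classical
  let g : W → W' ⊕ W := fun x => if hx : x ∈ s then Sum.inl (ψ ⟨x, hx⟩) else Sum.inr x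
  have g_mem : ∀ x (hx : x ∈ s), g x = Sum.inl (ψ ⟨x, hx⟩) := fun x hx => dif_pos hx
  have g_notMem : ∀ x, x ∉ s → g x = Sum.inr x := fun x hx => dif_neg hx
  refine ⟨⟨⟨g, fun x y hxy => ?_⟩, fun {x y} => ?_⟩, g_mem⟩
  · by_cases hx : x ∈ s <;> by_cases hy : y ∈ s
    · rw [g_mem x hx, g_mem y hy] at hxy
      exact congrArg Subtype.val (ψ.injective (Sum.inl_injective hxy))
    · simp [g_mem x hx, g_notMem y hy] at hxy
    · simp [g_notMem x hx, g_mem y hy] at hxy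
    · rw [g_notMem x hx, g_notMem y hy] at hxy
      exact Sum.inr_injective hxy
  · change (H ⊕g G).Adj (g x) (g y) ↔ G.Adj x y
    by_cases hx : x ∈ s <;> by_cases hy : y ∈ s
    · rw [g_mem x hx, g_mem y hy, sum_adj_inl, ψ.map_adj_iff, induce_adj]
    · rw [g_mem x hx, g_notMem y hy]
      exact iff_of_false (by simp) fun h => hy ((hs x y h).1 hx)
    · rw [g_notMem x hx, g_mem y hy]
      exact iff_of_false (by simp) fun h => hx ((hs x y h).2 hy)
    · rw [g_notMem x hx, g_notMem y hy, sum_adj_inr]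

end Copies

/-! ### Long paths and threads -/

/-- `p` restricts to a path in `G` whose vertices are indexed by the integers in `[a, b]`; its
values outside that interval are irrelevant. -/
structure IsPathOn {W : Type*} (G : SimpleGraph W) (p : ℤ → W) (a b : ℤ) : Prop where
  injOn : Set.InjOn p (Set.Icc a b)
  adj : ∀ i ∈ Set.Ico a b, G.Adj (p i) (p (i + 1))

/-- A thread is a path whose interior vertices have no neighbours off the path: locally the graph
looks like a line. -/
structure IsThread {W : Type*} (G : SimpleGraph W) (p : ℤ → W) (a b : ℤ) : Prop
    extends IsPathOn G p a b where
  neighborSet_subset : ∀ i ∈ Set.Ioo a b, G.neighborSet (p i) ⊆ {p (i - 1), p (i + 1)}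

/-- The only consequence of excluding a near path that the amalgamation argument uses: the midpoint
of a path of length `2 * n` has no third neighbour. -/
def HasThinMidpoints {W : Type*} (G : SimpleGraph W) (n : ℕ) : Prop :=
  ∀ p : ℤ → W, IsPathOn G p (-n) n → G.neighborSet (p 0) ⊆ {p (-1), p 1}

section Paths

variable {W W' : Type*} {G : SimpleGraph W} {H : SimpleGraph W'} {p : ℤ → W} {a b : ℤ}

theorem IsPathOn.mono {a' b' : ℤ} (hp : IsPathOn G p a b) (ha : a ≤ a') (hb : b' ≤ b) :
    IsPathOn G p a' b' :=
  ⟨hp.injOn.mono (Set.Icc_subset_Icc ha hb), fun i hi => hp.adj i (Set.Ico_subset_Ico ha hb hi)⟩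

theorem IsPathOn.comp_add (hp : IsPathOn G p a b) (c : ℤ) :
    IsPathOn G (fun i => p (c + i)) (a - c) (b - c) where
  injOn i hi j hj hij := by
    rw [Set.mem_Icc] at hi hj
    exact add_left_cancel
      (hp.injOn (Set.mem_Icc.2 (by lia)) (Set.mem_Icc.2 (by lia)) hij)
  adj i hi := by
    rw [Set.mem_Ico] at hi
    simpa only [add_assoc] using hp.adj (c + i) (Set.mem_Ico.2 (by lia))

theorem IsPathOn.comp_neg (hp : IsPathOn G p a b) : IsPathOn G (fun i => p (-i)) (-b) (-a) where
  injOn i hi j hj hij := by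
    rw [Set.mem_Icc] at hi hj
    exact neg_injective
      (hp.injOn (Set.mem_Icc.2 (by lia)) (Set.mem_Icc.2 (by lia)) hij)
  adj i hi := by
    rw [Set.mem_Ico] at hi
    simpa using (hp.adj (-(i + 1)) (Set.mem_Ico.2 (by lia))).symm

theorem IsPathOn.map (hp : IsPathOn G p a b) (f : Copy G H) :
    IsPathOn H (fun i => f (p i)) a b where
  injOn _ hi _ hj hij := hp.injOn hi hj (f.injective hij)
  adj i hi := f.toHom.map_adj (hp.adj i hi)

theorem isPathOn_getVert {u v : W} {w : G.Walk u v} (hw : w.IsPath) :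
    IsPathOn G (fun i => w.getVert i.toNat) 0 w.length where
  injOn i hi j hj hij := by
    rw [Set.mem_Icc] at hi hj
    have := hw.getVert_injOn (Set.mem_ofPred.2 (by lia)) (Set.mem_ofPred.2 (by lia)) hij
    lia
  adj i hi := by
    rw [Set.mem_Ico] at hi
    rw [show (i + 1).toNat = i.toNat + 1 by lia]
    exact w.adj_getVert_succ (by lia)

theorem IsPathOn.nontrivial_neighborSet (hp : IsPathOn G p a b) {i : ℤ} (hi : i ∈ Set.Ioo a b) :
    (G.neighborSet (p i)).Nontrivial := by
  rw [Set.mem_Ioo] at hi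
  have prev := hp.adj (i - 1) (Set.mem_Ico.2 (by lia))
  rw [sub_add_cancel] at prev
  refine ⟨_, prev.symm, _, hp.adj i (Set.mem_Ico.2 (by lia)), fun h => ?_⟩
  have := hp.injOn (Set.mem_Icc.2 (by lia)) (Set.mem_Icc.2 (by lia)) h
  lia

theorem IsPathOn.isContained_induce_hasse (hp : IsPathOn G p a b) {s : Set ℤ}
    (hs : s ⊆ Set.Icc a b) : (hasse ℤ).induce s ⊑ G := by
  refine ⟨⟨⟨fun i => p i, fun {i j} hij => ?_⟩, fun i j hij =>
    Subtype.ext (hp.injOn (hs i.2) (hs j.2) hij)⟩⟩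
  have hi := Set.mem_Icc.1 (hs i.2)
  have hj := Set.mem_Icc.1 (hs j.2)
  rw [induce_adj, hasse_adj, Order.covBy_iff_add_one_eq, Order.covBy_iff_add_one_eq] at hij
  rcases hij with h | h
  · exact h ▸ hp.adj i (Set.mem_Ico.2 (by lia))
  · exact h ▸ (hp.adj j (Set.mem_Ico.2 (by lia))).symm

theorem IsThread.adj_iff (hp : IsThread G p a b) {i j : ℤ} (hi : i ∈ Set.Ioo a b)
    (hj : j ∈ Set.Ioo a b) : G.Adj (p i) (p j) ↔ (hasse ℤ).Adj i j := by
  rw [hasse_adj, Order.covBy_iff_add_one_eq, Order.covBy_iff_add_one_eq]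
  rw [Set.mem_Ioo] at hi hj
  refine ⟨fun h => ?_, ?_⟩
  · have eq_of_eq : ∀ k ∈ Set.Icc a b, p j = p k → j = k := fun k hk =>
      hp.injOn (Set.mem_Icc.2 (by lia)) hk
    rcases hp.neighborSet_subset i hi h with h | h
    · have := eq_of_eq _ (Set.mem_Icc.2 (by lia)) h
      lia
    · have := eq_of_eq _ (Set.mem_Icc.2 (by lia)) h
      lia
  · rintro (rfl | rfl)
    · exact hp.adj i (Set.mem_Ico.2 (by lia))
    · exact (hp.adj j (Set.mem_Ico.2 (by lia))).symm

/-- The interior of a thread, as an induced copy of an interval of the integer line. -/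
def IsThread.embedding (hp : IsThread G p a b) : (hasse ℤ).induce (Set.Ioo a b) ↪g G where
  toFun i := p i
  inj' i j hij := Subtype.ext
    (hp.injOn (Set.Ioo_subset_Icc_self i.2) (Set.Ioo_subset_Icc_self j.2) hij)
  map_rel_iff' {i j} := hp.adj_iff i.2 j.2

theorem IsThread.exists_eq_of_walk (hp : IsThread G p a b) {u v : W} (w : G.Walk u v) {i : ℤ}
    (hu : u = p i) (ha : a ≤ i - w.length) (hb : i + w.length ≤ b) :
    ∃ j ∈ Set.Icc (i - w.length) (i + w.length), v = p j := by
  induction w generalizing i with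
  | nil => exact ⟨i, by simp, hu⟩
  | cons h w ih =>
    subst hu
    simp only [Walk.length_cons, Nat.cast_add, Nat.cast_one, Set.mem_Icc] at ha hb ih ⊢
    rcases hp.neighborSet_subset i (Set.mem_Ioo.2 (by lia)) h with h | h
    · obtain ⟨j, hj, hv⟩ := ih h (by lia) (by lia)
      exact ⟨j, by lia, hv⟩
    · obtain ⟨j, hj, hv⟩ := ih h (by lia) (by lia)
      exact ⟨j, by lia, hv⟩

theorem isContained_induce_hasse_of_isThread {V : Type*} [Finite V] {N : SimpleGraph V} {n : ℕ}
    (hN : N.Preconnected) (hcard : Nat.card V < n) (hp : IsThread G p (-n) n) (φ : Copy N G)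
    {x : V} (hx : φ x = p 0) : N ⊑ (hasse ℤ).induce (Set.Ioo (-n : ℤ) n) := by
  have := Fintype.ofFinite V
  rw [Nat.card_eq_fintype_card] at hcard
  refine isContained_of_forall_mem_range hp.embedding φ fun y => ?_
  obtain ⟨w, hw⟩ := (hN x y).exists_isPath
  have hlen := hw.length_lt
  obtain ⟨j, hj, hy⟩ := hp.exists_eq_of_walk (w.map φ.toHom) hx
    (by rw [Walk.length_map]; lia) (by rw [Walk.length_map]; lia)
  rw [Walk.length_map, Set.mem_Icc] at hj
  exact ⟨⟨j, Set.mem_Ioo.2 (by lia)⟩, hy.symm⟩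

theorem HasThinMidpoints.neighborSet_subset {n : ℕ} (hG : HasThinMidpoints G n)
    (hp : IsPathOn G p a b) {i : ℤ} (hi : i ∈ Set.Icc (a + n) (b - n)) :
    G.neighborSet (p i) ⊆ {p (i - 1), p (i + 1)} := by
  rw [Set.mem_Icc] at hi
  simpa [← sub_eq_add_neg] using
    hG _ ((hp.comp_add i).mono (a' := -n) (b' := n) (by lia) (by lia))

theorem HasThinMidpoints.isThread {n : ℕ} (hG : HasThinMidpoints G n) (hp : IsPathOn G p a b) :
    IsThread G p (a + n) (b - n) where
  toIsPathOn := hp.mono (by lia) (by lia)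
  neighborSet_subset _ hi := hG.neighborSet_subset hp (Set.Ioo_subset_Icc_self hi)

end Paths

/-! ### Excluding a near path -/

section NearPath

variable {W : Type*} {G : SimpleGraph W} {p : ℤ → W} {m : ℕ}

theorem IsPathOn.pathGraph_isContained (hp : IsPathOn G p 0 m) : pathGraph m ⊑ G := by
  refine ⟨⟨⟨fun i => p i, fun {i j} hij => ?_⟩, fun i j hij => Fin.ext ?_⟩⟩
  · rcases pathGraph_adj.1 hij with h | h
    · simpa [← h] using hp.adj i (Set.mem_Ico.2 (by lia))
    · simpa [← h] using (hp.adj j (Set.mem_Ico.2 (by lia))).symm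
  · have mem_Icc : ∀ i : Fin m, (i : ℤ) ∈ Set.Icc (0 : ℤ) m := fun i =>
      Set.mem_Icc.2 (by have := i.is_lt; lia)
    exact Int.ofNat_inj.1 (hp.injOn (mem_Icc i) (mem_Icc j) hij)

theorem hasThinMidpoints_of_pathGraph_free (hG : (pathGraph m).Free G) :
    HasThinMidpoints G (m + 1) := fun _ hp =>
  absurd (hp.mono (by lia) (by lia)).pathGraph_isContained hG

theorem nearPath_adj_castSucc {k i j : Fin m} (hij : (i : ℕ) + 1 = j) :
    (nearPath m k).Adj (Sum.inl i) (Sum.inl j) :=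
  (fromRel_adj _ _ _).2 ⟨fun h => by have := Sum.inl_injective h; lia,
    Or.inl (Or.inl ⟨i, j, rfl, rfl, hij⟩)⟩

theorem nearPath_adj_pendant (k : Fin m) : (nearPath m k).Adj (Sum.inl k) (Sum.inr ()) :=
  (fromRel_adj _ _ _).2 ⟨Sum.inl_ne_inr, Or.inl (Or.inr ⟨rfl, rfl⟩)⟩

theorem nearPath_preconnected (m : ℕ) (k : Fin m) : (nearPath m k).Preconnected := by
  let path : pathGraph m →g nearPath m k :=
    { toFun := Sum.inl
      map_rel' := fun {i j} hij => by
        rcases pathGraph_adj.1 hij with h | h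
        · exact nearPath_adj_castSucc h
        · exact (nearPath_adj_castSucc h).symm }
  have reachable : ∀ x, (nearPath m k).Reachable (Sum.inl k) x := by
    rintro (i | _)
    · exact (pathGraph_preconnected m k i).map path
    · exact (nearPath_adj_pendant k).reachable
  exact fun x y => (reachable x).symm.trans (reachable y)

theorem IsPathOn.nearPath_isContained {k : Fin m} {w : W} (hp : IsPathOn G p (-k) (m - k - 1))
    (hw : G.Adj (p 0) w) (hne : ∀ i ∈ Set.Icc (-k : ℤ) (m - k - 1), p i ≠ w) :
    nearPath m k ⊑ G := by
  let f : Fin m ⊕ Unit → W := Sum.elim (fun i => p (i - k)) fun _ => w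
  have map_adj : ∀ a b, ((∃ i j : Fin m, a = Sum.inl i ∧ b = Sum.inl j ∧ (i : ℕ) + 1 = j) ∨
      a = Sum.inl k ∧ b = Sum.inr ()) → G.Adj (f a) (f b) := by
    rintro a b (⟨i, j, rfl, rfl, h⟩ | ⟨rfl, rfl⟩)
    · have step := hp.adj (i - k) (Set.mem_Ico.2 (by lia))
      rwa [show (i - k : ℤ) + 1 = j - k by lia] at step
    · simpa [f] using hw
  have mem_Icc : ∀ i : Fin m, (i - k : ℤ) ∈ Set.Icc (-k : ℤ) (m - k - 1) := fun i =>
    Set.mem_Icc.2 (by have := i.is_lt; lia)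
  refine ⟨⟨⟨f, fun {a b} hab => ?_⟩, ?_⟩⟩
  · rcases ((fromRel_adj _ _ _).1 hab).2 with h | h
    · exact map_adj a b h
    · exact (map_adj b a h).symm
  · rintro (i | _) (j | _) hij
    · have := hp.injOn (mem_Icc i) (mem_Icc j) hij
      exact congrArg Sum.inl (Fin.ext (by lia))
    · exact absurd hij (hne _ (mem_Icc i))
    · exact absurd hij.symm (hne _ (mem_Icc j))
    · rfl

/-- Take the chord as the step from `p 0` to the rest of the path; this frees `p 1`. -/
theorem IsPathOn.exists_pendant_of_chord {j : ℤ} (hp : IsPathOn G p (-m) (2 * m))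
    (hj : j ∈ Set.Icc 2 (m : ℤ)) (chord : G.Adj (p 0) (p j)) :
    ∃ (q : ℤ → W) (w : W), IsPathOn G q (-m) m ∧ G.Adj (q 0) w ∧
      ∀ i ∈ Set.Icc (-m : ℤ) m, q i ≠ w := by
  rw [Set.mem_Icc] at hj
  let σ : ℤ → ℤ := fun i => if i ≤ 0 then i else j + i - 1
  have σ_mem : ∀ i ∈ Set.Icc (-m : ℤ) m, σ i ∈ Set.Icc (-m : ℤ) (2 * m) := fun i hi => by
    rw [Set.mem_Icc] at hi ⊢
    grind
  refine ⟨p ∘ σ, p 1, ⟨fun i hi i' hi' h => ?_, fun i hi => ?_⟩, ?_, fun i hi h => ?_⟩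
  · have := hp.injOn (σ_mem i hi) (σ_mem i' hi') h
    grind
  · rw [Set.mem_Ico] at hi
    rcases lt_trichotomy i 0 with h | rfl | h
    · have := hp.adj i (Set.mem_Ico.2 (by lia))
      grind
    · simpa [σ] using chord
    · have := hp.adj (j + i - 1) (Set.mem_Ico.2 (by lia))
      grind
  · simpa [σ] using hp.adj 0 (Set.mem_Ico.2 (by lia))
  · have := hp.injOn (σ_mem i hi) (Set.mem_Icc.2 (by lia)) h
    grind

theorem IsPathOn.exists_pendant {w : W} (hp : IsPathOn G p (-(2 * m)) (2 * m))
    (hw : G.Adj (p 0) w) (hne : w ∉ ({p (-1), p 1} : Set W)) :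
    ∃ (q : ℤ → W) (w : W), IsPathOn G q (-m) m ∧ G.Adj (q 0) w ∧
      ∀ i ∈ Set.Icc (-m : ℤ) m, q i ≠ w := by
  by_cases hmem : ∃ j ∈ Set.Icc (-m : ℤ) m, p j = w
  · obtain ⟨j, hj, rfl⟩ := hmem
    rw [Set.mem_Icc] at hj
    have : j ≠ 0 := fun h => hw.ne (h ▸ rfl)
    have : j ≠ -1 := fun h => hne (h ▸ Or.inl rfl)
    have : j ≠ 1 := fun h => hne (h ▸ Or.inr rfl)
    rcases lt_or_ge j 0 with hneg | hpos
    · exact IsPathOn.exists_pendant_of_chord (j := -j) (hp.comp_neg.mono (by lia) (by lia))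
        (Set.mem_Icc.2 (by lia)) (by simpa using hw)
    · exact (hp.mono (by lia) le_rfl).exists_pendant_of_chord (Set.mem_Icc.2 (by lia)) hw
  · push Not at hmem
    exact ⟨p, w, hp.mono (by lia) (by lia), hw, hmem⟩

theorem hasThinMidpoints_of_nearPath_free {k : Fin m} (hG : (nearPath m k).Free G) :
    HasThinMidpoints G (2 * m + 2) := fun p hp w hw => by
  by_contra hne
  have := k.is_lt
  obtain ⟨q, w', hq, hqw, hqne⟩ :=
    IsPathOn.exists_pendant (m := m) (hp.mono (by lia) (by lia)) hw hne
  exact hG <| (hq.mono (by lia) (by lia)).nearPath_isContained hqw fun i hi =>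
    hqne i (Set.Icc_subset_Icc (by lia) (by lia) hi)

end NearPath

/-! ### Doubling along tails -/

/-- `l` is a leaf at which a thread of length `n` ends. -/
def IsTailEnd {W : Type*} (G : SimpleGraph W) (n : ℕ) (l : W) : Prop :=
  ∃ p : ℤ → W, p 0 = l ∧ IsThread G p 0 n ∧ G.neighborSet l ⊆ {p 1}

/-- Two copies of `G`, with an edge joining the two copies of each vertex in `s`. -/
def doubleAlong {W : Type*} (G : SimpleGraph W) (s : Set W) : SimpleGraph (W × Bool) where
  Adj x y := x.2 = y.2 ∧ G.Adj x.1 y.1 ∨ x.2 ≠ y.2 ∧ x.1 = y.1 ∧ x.1 ∈ s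
  symm := ⟨by
    rintro x y (⟨hside, h⟩ | ⟨hside, h, hx⟩)
    · exact Or.inl ⟨hside.symm, h.symm⟩
    · exact Or.inr ⟨hside.symm, h.symm, h ▸ hx⟩⟩
  loopless := ⟨by
    rintro x (⟨-, h⟩ | ⟨hside, -⟩)
    · exact h.ne rfl
    · exact hside rfl⟩

/-- One of the two copies of `G` inside its double. -/
def doubleEmbedding {W : Type*} (G : SimpleGraph W) (s : Set W) (t : Bool) :
    G ↪g doubleAlong G s where
  toFun x := (x, t)
  inj' _ _ h := congrArg Prod.fst h
  map_rel_iff' := ⟨fun h => h.elim And.right fun h => absurd rfl h.1, fun h => Or.inl ⟨rfl, h⟩⟩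

/-- The two copies of the path `p 0, p 1, …` joined at `p 0`: nonnegative indices run through the
copy `t`, negative ones through the other copy, so that `p 0` occurs at the indices `0` and `-1`. -/
def throughJoint {W : Type*} (p : ℤ → W) (t : Bool) (j : ℤ) : W × Bool :=
  if 0 ≤ j then (p j, t) else (p (-1 - j), !t)

section Double

variable {W : Type*} {G : SimpleGraph W} {s : Set W} {p : ℤ → W} {b : ℤ} {n : ℕ} {t : Bool}

theorem IsThread.mono {a a' b' : ℤ} (hp : IsThread G p a b) (ha : a ≤ a') (hb : b' ≤ b) :
    IsThread G p a' b' where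
  toIsPathOn := hp.toIsPathOn.mono ha hb
  neighborSet_subset i hi := hp.neighborSet_subset i (Set.Ioo_subset_Ioo ha hb hi)

theorem IsTailEnd.subsingleton_neighborSet {l : W} (hl : IsTailEnd G n l) :
    (G.neighborSet l).Subsingleton := by
  obtain ⟨p, -, -, hl⟩ := hl
  exact Set.subsingleton_singleton.anti hl

theorem throughJoint_of_nonneg {j : ℤ} (hj : 0 ≤ j) : throughJoint p t j = (p j, t) := if_pos hj

theorem throughJoint_not_reflect (p : ℤ → W) (t : Bool) (j : ℤ) :
    throughJoint p (!t) (-1 - j) = throughJoint p t j := by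
  rcases le_or_gt 0 j with hj | hj
  · rw [throughJoint, if_neg (by lia), throughJoint_of_nonneg hj]
    simp
  · rw [throughJoint_of_nonneg (by lia), throughJoint, if_neg (by lia)]

theorem injOn_throughJoint (hp : Set.InjOn p (Set.Icc 0 b)) :
    Set.InjOn (throughJoint p t) (Set.Icc (-1 - b) b) := by
  intro i hi j hj hij
  rw [Set.mem_Icc] at hi hj
  unfold throughJoint at hij
  split_ifs at hij with hi0 hj0 hj0
  · exact hp (Set.mem_Icc.2 (by lia)) (Set.mem_Icc.2 (by lia)) (congrArg Prod.fst hij)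
  · simp at hij
  · simp at hij
  · have := hp (Set.mem_Icc.2 (by lia)) (Set.mem_Icc.2 (by lia)) (congrArg Prod.fst hij)
    lia

theorem isPathOn_throughJoint (hp : IsPathOn G p 0 b) (h0 : p 0 ∈ s) :
    IsPathOn (doubleAlong G s) (throughJoint p t) (-1 - b) b where
  injOn := injOn_throughJoint hp.injOn
  adj i hi := by
    have adj_of_nonneg : ∀ (t : Bool) (j : ℤ), 0 ≤ j → j < b →
        (doubleAlong G s).Adj (throughJoint p t j) (throughJoint p t (j + 1)) := by
      intro t j hj hjb
      rw [throughJoint_of_nonneg hj, throughJoint_of_nonneg (by lia)]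
      exact Or.inl ⟨rfl, hp.adj j (Set.mem_Ico.2 (by lia))⟩
    rw [Set.mem_Ico] at hi
    rcases lt_trichotomy i (-1) with h | rfl | h
    · have := (adj_of_nonneg (!t) (-1 - (i + 1)) (by lia) (by lia)).symm
      rwa [show -1 - (i + 1) + 1 = -1 - i by ring, throughJoint_not_reflect,
        throughJoint_not_reflect] at this
    · exact Or.inr ⟨by simp [throughJoint], by simp [throughJoint], by
        simpa [throughJoint] using h0⟩
    · exact adj_of_nonneg t i (by lia) hi.2

theorem neighborSet_throughJoint_subset (hp : IsThread G p 0 b)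
    (h0 : G.neighborSet (p 0) ⊆ {p 1}) (hs : ∀ i ∈ Set.Ioo 0 b, p i ∉ s) {j : ℤ} (hj : 0 ≤ j)
    (hjb : j < b) : (doubleAlong G s).neighborSet (throughJoint p t j) ⊆
      {throughJoint p t (j - 1), throughJoint p t (j + 1)} := by
  rintro ⟨w, t'⟩ hw
  rw [throughJoint_of_nonneg hj] at hw
  rw [throughJoint_of_nonneg (j := j + 1) (by lia)]
  rcases hj.eq_or_lt with rfl | hj0
  · rcases hw with ⟨rfl, h⟩ | ⟨hside, rfl, -⟩
    · exact Or.inr (congrArg (·, t) (h0 h))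
    · refine Or.inl ?_
      obtain rfl : t' = !t := Bool.eq_not.2 (Ne.symm hside)
      simp [throughJoint]
  · rcases hw with ⟨rfl, h⟩ | ⟨-, -, h⟩
    · rw [throughJoint_of_nonneg (by lia)]
      exact (hp.neighborSet_subset j ⟨hj0, hjb⟩ h).imp (congrArg (·, t)) (congrArg (·, t))
    · exact absurd h (hs j ⟨hj0, hjb⟩)

theorem isThread_throughJoint (hp : IsThread G p 0 b) (h0 : G.neighborSet (p 0) ⊆ {p 1})
    (hmem : p 0 ∈ s) (hs : ∀ i ∈ Set.Ioo 0 b, p i ∉ s) :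
    IsThread (doubleAlong G s) (throughJoint p t) (-1 - b) b where
  toIsPathOn := isPathOn_throughJoint hp.toIsPathOn hmem
  neighborSet_subset i hi := by
    rw [Set.mem_Ioo] at hi
    rcases le_or_gt 0 i with h | h
    · exact neighborSet_throughJoint_subset hp h0 hs h hi.2
    · have := neighborSet_throughJoint_subset (t := !t) hp h0 hs (j := -1 - i) (by lia) (by lia)
      rwa [show -1 - i - 1 = -1 - (i + 1) by ring, show -1 - i + 1 = -1 - (i - 1) by ring,
        throughJoint_not_reflect, throughJoint_not_reflect, throughJoint_not_reflect,
        Set.pair_comm] at this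

theorem isThread_throughJoint_of_tail (hp : IsThread G p 0 n) (h0 : G.neighborSet (p 0) ⊆ {p 1}) :
    IsThread (doubleAlong G {l | IsTailEnd G n l}) (throughJoint p t) (-n) n :=
  (isThread_throughJoint hp h0 (s := {l | IsTailEnd G n l}) ⟨p, rfl, hp, h0⟩ fun _ hi h =>
    Set.not_nontrivial_iff.2 h.subsingleton_neighborSet (hp.nontrivial_neighborSet hi)).mono
      (by lia) le_rfl

/-- A copy of `N` meeting a joint is contained in the thread through that joint, and `G` contains
an equally long path; any other copy stays inside one of the two copies of `G`. -/
theorem doubleAlong_free {V : Type*} [Finite V] {N : SimpleGraph V} (hN : N.Preconnected)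
    (hcard : Nat.card V < n) (hG : N.Free G) {q : ℤ → W} (hq : IsPathOn G q (-n) n) :
    N.Free (doubleAlong G {l | IsTailEnd G n l}) := by
  rintro ⟨φ⟩
  refine hG ?_
  by_cases hjoint : ∃ x, IsTailEnd G n (φ x).1
  · obtain ⟨x, p, hpx, hp, hl⟩ := hjoint
    refine (isContained_induce_hasse_of_isThread hN hcard
      (isThread_throughJoint_of_tail (t := (φ x).2) hp (hpx ▸ hl)) φ (x := x) ?_).trans
      (hq.isContained_induce_hasse Set.Ioo_subset_Icc_self)
    rw [throughJoint_of_nonneg le_rfl, hpx]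
  · have same_side : ∀ x y, (φ x).2 = (φ y).2 :=
      eq_of_preconnected_of_forall_adj hN fun x y hxy =>
        (φ.toHom.map_adj hxy).elim And.left fun h => absurd ⟨x, h.2.2⟩ hjoint
    rcases isEmpty_or_nonempty V with _ | ⟨⟨x⟩⟩
    · exact IsContained.of_isEmpty
    · exact isContained_of_forall_mem_range (doubleEmbedding G _ (φ x).2) φ fun y =>
        ⟨(φ y).1, Prod.ext rfl (same_side x y)⟩

end Double

/-! ### Paths leaving a doubled tail -/

/-- `v` has at most two neighbours. -/
def IsThinAt {W : Type*} (G : SimpleGraph W) (v : W) : Prop :=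
  (G.neighborSet v).encard ≤ 2

/-- The edges of `G` both of whose ends have at most two neighbours in `G`. -/
def thinSubgraph {W : Type*} (G : SimpleGraph W) : SimpleGraph W where
  Adj x y := G.Adj x y ∧ IsThinAt G x ∧ IsThinAt G y
  symm := ⟨fun _ _ h => ⟨h.1.symm, h.2.2, h.2.1⟩⟩
  loopless := ⟨fun _ h => h.1.ne rfl⟩

/-- Every path of `G` starting at `r` has fewer than `k` edges. -/
def PathsShorter {W : Type*} (G : SimpleGraph W) (r : W) (k : ℕ) : Prop :=
  ∀ ⦃u : W⦄ (w : G.Walk r u), w.IsPath → w.length < k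

section Thin

variable {W W' : Type*} {G : SimpleGraph W} {H : SimpleGraph W'} {p q : ℤ → W} {n : ℕ} {v : W}

theorem isThinAt_of_subset_pair {a b : W} (h : G.neighborSet v ⊆ {a, b}) : IsThinAt G v :=
  calc (G.neighborSet v).encard ≤ ({a, b} : Set W).encard := Set.encard_le_encard h
    _ ≤ ({b} : Set W).encard + 1 := Set.encard_insert_le _ _
    _ = 2 := by rw [Set.encard_singleton, one_add_one_eq_two]

theorem IsThinAt.of_embedding (f : G ↪g H) (hv : IsThinAt H (f v)) : IsThinAt G v :=
  calc (G.neighborSet v).encard = (f '' G.neighborSet v).encard :=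
        (f.injective.encard_image _).symm
    _ ≤ (H.neighborSet (f v)).encard :=
        Set.encard_le_encard (Set.image_subset_iff.2 fun _ h => f.map_adj_iff.2 h)
    _ ≤ 2 := hv

theorem IsThinAt.neighborSet_eq (hv : IsThinAt G v) {a b : W} (ha : G.Adj v a) (hb : G.Adj v b)
    (hab : a ≠ b) : G.neighborSet v = {a, b} :=
  ((Set.toFinite _).eq_of_subset_of_encard_le (Set.pair_subset ha hb)
    (hv.trans (Set.encard_pair hab).ge)).symm

theorem thinSubgraph_le (G : SimpleGraph W) : thinSubgraph G ≤ G := fun _ _ h => h.1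

theorem IsPathOn.isThread_of_thinSubgraph {a b : ℤ} (hp : IsPathOn (thinSubgraph G) p a b) :
    IsThread G p a b where
  toIsPathOn := hp.map (Copy.ofLE _ _ (thinSubgraph_le G))
  neighborSet_subset i hi := by
    rw [Set.mem_Ioo] at hi
    have next := hp.adj i (Set.mem_Ico.2 (by lia))
    have prev := (hp.adj (i - 1) (Set.mem_Ico.2 (by lia))).symm
    rw [sub_add_cancel] at prev
    refine (next.2.1.neighborSet_eq prev.1 next.1 fun h => ?_).subset
    have := hp.injOn (Set.mem_Icc.2 (by lia)) (Set.mem_Icc.2 (by lia)) h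
    lia

theorem HasThinMidpoints.isTailEnd (hG : HasThinMidpoints G n) (hn : 0 < n)
    (hq : IsPathOn G q (-(2 * n)) (2 * n)) (hv : (thinSubgraph G).Reachable (q 0) v)
    (hleaf : (G.neighborSet v).Subsingleton) : IsTailEnd G n v := by
  obtain ⟨w, hw⟩ := hv.symm.exists_isPath
  rcases le_or_gt n w.length with hlong | hshort
  · have tail := (isPathOn_getVert hw).isThread_of_thinSubgraph.mono le_rfl (by lia : (n : ℤ) ≤ _)
    have first := tail.adj 0 (Set.mem_Ico.2 (by lia))
    refine ⟨_, by simp, tail, fun x hx => hleaf hx ?_⟩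
    simpa using first
  · obtain ⟨j, hj, rfl⟩ := (hG.isThread hq).exists_eq_of_walk
      (w.reverse.mapLe (thinSubgraph_le G)) rfl
      (by simp only [Walk.length_mapLe, Walk.length_reverse]; lia)
      (by simp only [Walk.length_mapLe, Walk.length_reverse]; lia)
    rw [Walk.length_mapLe, Walk.length_reverse, Set.mem_Icc] at hj
    exact absurd hleaf
      (Set.not_subsingleton_iff.2 (hq.nontrivial_neighborSet (Set.mem_Ioo.2 (by lia))))

theorem reachable_fst_of_doubleAlong {s : Set W} {x y : W × Bool}
    (h : (thinSubgraph (doubleAlong G s)).Reachable x y) :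
    (thinSubgraph G).Reachable x.1 y.1 := by
  obtain ⟨w⟩ := h
  induction w with
  | nil => rfl
  | @cons x y _ hxy _ ih =>
    obtain ⟨⟨-, h⟩ | ⟨-, h, -⟩, hx, hy⟩ := hxy
    · have step : (thinSubgraph G).Adj x.1 y.1 :=
        ⟨h, hx.of_embedding (doubleEmbedding G s x.2), hy.of_embedding (doubleEmbedding G s y.2)⟩
      exact step.reachable.trans ih
    · exact h ▸ ih

/-- Doubling along the tails leaves no leaf within reach of `q 0`: a leaf of `G` there ends a tail,
so it gains a neighbour in the other copy. -/
theorem HasThinMidpoints.nontrivial_neighborSet_doubleAlong (hG : HasThinMidpoints G n)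
    (hn : 0 < n) (hq : IsPathOn G q (-(2 * n)) (2 * n)) {t : Bool} {x : W × Bool}
    (hx : (thinSubgraph (doubleAlong G {l | IsTailEnd G n l})).Reachable (q 0, t) x) :
    ((doubleAlong G {l | IsTailEnd G n l}).neighborSet x).Nontrivial := by
  by_cases hleaf : (G.neighborSet x.1).Subsingleton
  · have hend := hG.isTailEnd hn hq (reachable_fst_of_doubleAlong hx) hleaf
    obtain ⟨p, hpx, hp, -⟩ := id hend
    have first := hp.adj 0 (Set.mem_Ico.2 (by lia))
    rw [hpx] at first
    exact ⟨(p (0 + 1), x.2), Or.inl ⟨rfl, first⟩, (x.1, !x.2), Or.inr ⟨by simp, rfl, hend⟩, by simp⟩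
  · obtain ⟨a, ha, b, hb, hab⟩ := Set.not_subsingleton_iff.1 hleaf
    exact ⟨(a, x.2), Or.inl ⟨rfl, ha⟩, (b, x.2), Or.inl ⟨rfl, hb⟩,
      fun h => hab (congrArg Prod.fst h)⟩

theorem mem_range_of_thin_walk (f : G ↪g H) {d : W}
    (hd : ∀ x, (thinSubgraph G).Reachable d x → (G.neighborSet x).Nontrivial) {r u : W'}
    (w : H.Walk r u) (hr : f d = r) (hthin : ∀ x ∈ w.support, IsThinAt H x) :
    ∀ x ∈ w.support, x ∈ Set.range f := by
  induction w generalizing d with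
  | nil => simp [← hr]
  | @cons r r' u h w ih =>
    subst hr
    rw [Walk.support_cons, List.forall_mem_cons] at hthin ⊢
    obtain ⟨a, ha, b, hb, hab⟩ := hd d .rfl
    have hnbr := hthin.1.neighborSet_eq (f.map_adj_iff.2 ha) (f.map_adj_iff.2 hb)
      (f.injective.ne hab)
    obtain ⟨c, hc, rfl⟩ : ∃ c, G.Adj d c ∧ f c = r' := by
      rcases hnbr.subset h with h | h
      · exact ⟨a, ha, h.symm⟩
      · exact ⟨b, hb, h.symm⟩
    have step : (thinSubgraph G).Adj d c :=
      ⟨hc, hthin.1.of_embedding f, (hthin.2 _ w.start_mem_support).of_embedding f⟩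
    exact ⟨⟨d, rfl⟩, ih (fun x hx => hd x (step.reachable.trans hx)) rfl hthin.2⟩

theorem length_lt_card_of_support_subset_range {α : Type*} [Finite α] {f : α → W} {u : W}
    {w : G.Walk v u} (hw : w.IsPath) (hf : ∀ x ∈ w.support, x ∈ Set.range f) :
    w.length < Nat.card α := by
  classical
  have := Fintype.ofFinite α
  have hsub : w.support.toFinset ⊆ Finset.univ.image f := fun x hx => by
    simpa using hf x (List.mem_toFinset.1 hx)
  calc w.length < w.support.toFinset.card := by
        rw [List.toFinset_card_of_nodup hw.support_nodup, Walk.length_support]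
        exact Nat.lt_succ_self _
    _ ≤ (Finset.univ.image f).card := Finset.card_le_card hsub
    _ ≤ Nat.card α := by
        rw [Nat.card_eq_fintype_card]
        exact Finset.card_image_le

theorem HasThinMidpoints.isThinAt_getVert (hG : HasThinMidpoints G n)
    (hq : IsPathOn G q (-(2 * n)) (2 * n)) {u : W} {w : G.Walk (q 0) u} (hw : w.IsPath) {i : ℕ}
    (hi : i + n ≤ w.length) : IsThinAt G (w.getVert i) := by
  rcases lt_or_ge i n with hin | hni
  · obtain ⟨j, hj, hw'⟩ := (hG.isThread hq).exists_eq_of_walk (w.take i) rfl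
      (by rw [Walk.take_length]; lia) (by rw [Walk.take_length]; lia)
    rw [Walk.take_length, Set.mem_Icc] at hj
    rw [hw']
    exact isThinAt_of_subset_pair (hG.neighborSet_subset hq (Set.mem_Icc.2 (by lia)))
  · simpa using isThinAt_of_subset_pair
      (hG.neighborSet_subset (isPathOn_getVert hw) (i := i) (Set.mem_Icc.2 (by lia)))

/-- A longer path from `q 0` would start with more than `2 * Nat.card W` thin vertices, all of
which would lie in the double. -/
theorem HasThinMidpoints.pathsShorter_of_doubleAlong [Finite W] (hG : HasThinMidpoints G n)
    (hH : HasThinMidpoints H n) (hn : 0 < n) (hq : IsPathOn G q (-(2 * n)) (2 * n)) (t : Bool)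
    (f : doubleAlong G {l | IsTailEnd G n l} ↪g H) :
    PathsShorter H (f (q 0, t)) (2 * Nat.card W + n) := by
  intro u w hw
  by_contra! hlong
  have hq' := (hq.map (doubleEmbedding G _ t).toCopy).map f.toCopy
  let start := w.take (2 * Nat.card W)
  have hthin : ∀ x ∈ start.support, IsThinAt H x := fun x hx => by
    obtain ⟨i, rfl, -⟩ := Walk.mem_support_iff_exists_getVert.1 hx
    rw [Walk.take_getVert]
    exact hH.isThinAt_getVert hq' hw ((Nat.add_le_add_right (min_le_left _ _) n).trans hlong)
  have hlt := length_lt_card_of_support_subset_range (hw.take _)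
    (mem_range_of_thin_walk f (fun x => hG.nontrivial_neighborSet_doubleAlong hn hq)
      start rfl hthin)
  rw [Walk.take_length, Nat.card_prod, Nat.card_eq_fintype_card (α := Bool), Fintype.card_bool]
    at hlt
  lia

end Thin

/-! ### Graphs of bounded treedepth are well-quasi-ordered -/

universe u v

/-- `v` can be joined to a vertex at which no path with `k` or more edges starts. -/
def HasShortRoot {V : Type*} (G : SimpleGraph V) (v : V) (k : ℕ) : Prop :=
  ∃ r, G.Reachable v r ∧ PathsShorter G r k

/-- Treedepth at most `k`, in its recursive form: from each component of `G` some vertex can be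
deleted so as to leave a graph of treedepth at most `k - 1`. -/
def HasTreedepthLE : ℕ → ∀ {V : Type u}, SimpleGraph V → Prop
  | 0, V, _ => IsEmpty V
  | k + 1, _, G => ∀ c : G.ConnectedComponent,
      ∃ r : c, HasTreedepthLE k (c.toSimpleGraph.induce {r}ᶜ)

section Treedepth

variable {V : Type u} {V' : Type v} {G : SimpleGraph V} {H : SimpleGraph V'} {r : V} {k : ℕ}

theorem PathsShorter.of_copy (f : Copy G H) (h : PathsShorter H (f r) k) : PathsShorter G r k :=
  fun _ w hw => by
    simpa using h (w.map f.toHom) (hw.map f.injective)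

theorem HasShortRoot.mono {v : V} {l : ℕ} (h : HasShortRoot G v k) (hkl : k ≤ l) :
    HasShortRoot G v l :=
  let ⟨r, hvr, hr⟩ := h
  ⟨r, hvr, fun _ w hw => (hr w hw).trans_le hkl⟩

theorem PathsShorter.hasShortRoot_induce_compl (hr : PathsShorter G r (k + 1))
    (hG : G.Preconnected) (v : ({r}ᶜ : Set V)) : HasShortRoot (G.induce {r}ᶜ) v k := by
  obtain ⟨v, hv⟩ := v
  obtain ⟨w, hw⟩ := (hG r v).exists_isPath
  cases w with
  | nil => exact absurd rfl hv
  | @cons _ s _ h w =>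
    rw [Walk.cons_isPath_iff] at hw
    have avoids : ∀ x ∈ w.support, x ∈ ({r}ᶜ : Set V) := fun x hx hxr => hw.2 (hxr ▸ hx)
    refine ⟨⟨s, _⟩, (w.induce _ avoids).reverse.reachable, fun u w' hw' => ?_⟩
    let tail : G.Walk s u := w'.map (Embedding.induce _).toHom
    have htail : tail.IsPath := hw'.map Subtype.val_injective
    have root_notMem : r ∉ tail.support := fun hmem => by
      obtain ⟨x, -, hx⟩ := List.mem_map.1 (Walk.support_map _ _ ▸ hmem)
      exact x.2 hx
    calc w'.length = tail.length := (Walk.length_map _ _).symm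
      _ < k := Nat.lt_of_succ_lt_succ
        (hr (Walk.cons h tail) ((Walk.cons_isPath_iff _ _).2 ⟨htail, root_notMem⟩))

theorem hasTreedepthLE_of_hasShortRoot (hG : ∀ v, HasShortRoot G v k) : HasTreedepthLE k G := by
  induction k generalizing V with
  | zero =>
    refine ⟨fun v => ?_⟩
    obtain ⟨r, -, hr⟩ := hG v
    exact absurd (hr Walk.nil Walk.IsPath.nil) (Nat.not_lt_zero _)
  | succ k ih =>
    intro c
    obtain ⟨v, hv⟩ := c.nonempty_supp
    obtain ⟨r, hvr, hr⟩ := hG v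
    have hrc : r ∈ c := (ConnectedComponent.sound hvr.symm).trans hv
    exact ⟨⟨r, hrc⟩, ih ((hr.of_copy (r := (⟨r, hrc⟩ : c))
      (Embedding.induce _).toCopy).hasShortRoot_induce_compl
        c.connected_toSimpleGraph.preconnected)⟩

end Treedepth

/-- A finite graph with vertices labelled by `Λ`; these are quasi-ordered by label-preserving
induced embeddings. -/
structure LabeledGraph (Λ : Type v) : Type (max (u + 1) v) where
  V : Type u
  [finite : Finite V]
  graph : SimpleGraph V
  label : V → Λ

namespace LabeledGraph

attribute [instance] LabeledGraph.finite

variable {Λ : Type v}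

instance : Preorder (LabeledGraph.{u} Λ) where
  le X Y := ∃ f : X.graph ↪g Y.graph, ∀ x, Y.label (f x) = X.label x
  le_refl _ := ⟨Embedding.refl, fun _ => rfl⟩
  le_trans _ _ _ := fun ⟨f, hf⟩ ⟨g, hg⟩ => ⟨g.comp f, fun x => (hg _).trans (hf x)⟩

/-- A connected component, with the inherited labels. -/
def component (X : LabeledGraph.{u} Λ) (c : X.graph.ConnectedComponent) : LabeledGraph.{u} Λ where
  V := c
  graph := c.toSimpleGraph
  label x := X.label x

/-- Delete a vertex, recording in the labels which vertices were adjacent to it. -/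
def deleteVert (X : LabeledGraph.{u} Λ) (r : X.V) : LabeledGraph.{u} (Λ × Prop) where
  V := ({r}ᶜ : Set X.V)
  graph := X.graph.induce {r}ᶜ
  label x := (X.label x, X.graph.Adj r x)

theorem le_of_deleteVert {X Y : LabeledGraph.{u} Λ} {r : X.V} {s : Y.V}
    (hlabel : X.label r = Y.label s) (h : X.deleteVert r ≤ Y.deleteVert s) : X ≤ Y := by
  classical
  obtain ⟨f, hf⟩ := h
  let g : X.V → Y.V := fun x => if hx : x = r then s else (f ⟨x, hx⟩).1
  have g_root : g r = s := dif_pos rfl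
  have g_of_ne : ∀ x (hx : x ≠ r), g x = (f ⟨x, hx⟩).1 := fun x hx => dif_neg hx
  have g_ne_root : ∀ x, x ≠ r → g x ≠ s := fun x hx => g_of_ne x hx ▸ (f ⟨x, hx⟩).2
  have adj_root : ∀ x, x ≠ r → (Y.graph.Adj s (g x) ↔ X.graph.Adj r x) := fun x hx => by
    rw [g_of_ne x hx]
    exact iff_of_eq (congrArg Prod.snd (hf ⟨x, hx⟩))
  refine ⟨⟨⟨g, fun x y hxy => ?_⟩, fun {x y} => ?_⟩, fun x => ?_⟩
  · by_cases hx : x = r <;> by_cases hy : y = r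
    · rw [hx, hy]
    · exact absurd (hxy.symm.trans (hx ▸ g_root)) (g_ne_root y hy)
    · exact absurd (hxy.trans (hy ▸ g_root)) (g_ne_root x hx)
    · rw [g_of_ne x hx, g_of_ne y hy] at hxy
      exact congrArg Subtype.val (f.injective (Subtype.ext hxy))
  · change Y.graph.Adj (g x) (g y) ↔ X.graph.Adj x y
    by_cases hx : x = r <;> by_cases hy : y = r
    · rw [hx, hy]
      exact iff_of_false Y.graph.irrefl X.graph.irrefl
    · rw [hx, g_root, adj_root y hy]
    · rw [hy, g_root, adj_comm, adj_root x hx, adj_comm]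
    · rw [g_of_ne x hx, g_of_ne y hy]
      exact f.map_adj_iff
  · change Y.label (g x) = X.label x
    by_cases hx : x = r
    · rw [hx, g_root, hlabel]
    · rw [g_of_ne x hx]
      exact congrArg Prod.fst (hf ⟨x, hx⟩)

theorem le_of_components {X Y : LabeledGraph.{u} Λ}
    {g : X.graph.ConnectedComponent → Y.graph.ConnectedComponent} (hg : Function.Injective g)
    (h : ∀ c, X.component c ≤ Y.component (g c)) : X ≤ Y := by
  choose f hf using h
  let mk := X.graph.connectedComponentMk
  let φ : X.V → Y.V := fun x => (f (mk x) ⟨x, rfl⟩).1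
  have φ_eq : ∀ c x (hx : mk x = c), φ x = (f c ⟨x, hx⟩).1 := by
    rintro _ x rfl
    rfl
  have mk_φ : ∀ x, Y.graph.connectedComponentMk (φ x) = g (mk x) := fun x =>
    (f (mk x) ⟨x, rfl⟩).2
  have mk_eq : ∀ x y, Y.graph.connectedComponentMk (φ x) = Y.graph.connectedComponentMk (φ y) →
      mk x = mk y := fun x y hxy => hg ((mk_φ x).symm.trans (hxy.trans (mk_φ y)))
  refine ⟨⟨⟨φ, fun x y hxy => ?_⟩, fun {x y} => ⟨fun hxy => ?_, fun hxy => ?_⟩⟩,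
    fun x => hf _ ⟨x, rfl⟩⟩
  · have hc := mk_eq x y (congrArg _ hxy)
    rw [φ_eq _ x hc, φ_eq _ y rfl] at hxy
    exact congrArg Subtype.val ((f _).injective (Subtype.ext hxy))
  · have hc := mk_eq x y (ConnectedComponent.sound hxy.reachable)
    change Y.graph.Adj (φ x) (φ y) at hxy
    rw [φ_eq _ x hc, φ_eq _ y rfl] at hxy
    exact (f _).map_adj_iff.1 hxy
  · have hc : mk x = mk y := ConnectedComponent.sound hxy.reachable
    change Y.graph.Adj (φ x) (φ y)
    rw [φ_eq _ x hc, φ_eq _ y rfl]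
    exact (f _).map_adj_iff.2 hxy

end LabeledGraph

theorem exists_embedding_of_sublistForall₂_ofFn {α : Type*} {R : α → α → Prop} {m n : ℕ}
    {a : Fin m → α} {b : Fin n → α} (h : List.SublistForall₂ R (List.ofFn a) (List.ofFn b)) :
    ∃ g : Fin m ↪ Fin n, ∀ i, R (a i) (b (g i)) := by
  obtain ⟨l, hal, hlb⟩ := List.sublistForall₂_iff.1 h
  obtain ⟨g, hg⟩ := List.sublist_iff_exists_fin_orderEmbedding_get_eq.1 hlb
  obtain ⟨hlen, hR⟩ := List.forall₂_iff_get.1 hal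
  rw [List.length_ofFn] at hlen
  refine ⟨(finCongr hlen).toEmbedding.trans
    (g.toEmbedding.trans (finCongr List.length_ofFn).toEmbedding), fun i => ?_⟩
  have := hR i (by simp) (hlen ▸ i.2)
  rw [hg, List.get_ofFn, List.get_ofFn] at this
  exact this

/-- Higman's lemma for finite families instead of lists. -/
theorem exists_lt_exists_injective {α : Type*} [Preorder α] {s : Set α} (hs : s.IsPWO)
    {ι : ℕ → Type*} [∀ n, Finite (ι n)] (f : ∀ n, ι n → α) (hf : ∀ n i, f n i ∈ s) :
    ∃ m n, m < n ∧ ∃ g : ι m → ι n, Function.Injective g ∧ ∀ i, f m i ≤ f n (g i) := by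
  let e : ∀ n, ι n ≃ Fin (Nat.card (ι n)) := fun n => Finite.equivFin (ι n)
  obtain ⟨m, n, hmn, h⟩ := Set.partiallyWellOrderedOn_iff_exists_lt.1
    (Set.PartiallyWellOrderedOn.partiallyWellOrderedOn_sublistForall₂ (· ≤ ·) hs)
    (fun n => List.ofFn (f n ∘ (e n).symm)) fun n x hx => by
      obtain ⟨i, rfl⟩ := (List.mem_ofFn' _ _).1 hx
      exact hf n _
  obtain ⟨g, hg⟩ := exists_embedding_of_sublistForall₂_ofFn h
  exact ⟨m, n, hmn, (e n).symm ∘ g ∘ e m,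
    (e n).symm.injective.comp (g.injective.comp (e m).injective),
    fun i => by simpa using hg (e m i)⟩

namespace LabeledGraph

variable {Λ : Type v}

theorem isPWO_setOf_exists_deleteVert_mem [Finite Λ] {S : Set (LabeledGraph.{u} (Λ × Prop))}
    (hS : S.IsPWO) : {X : LabeledGraph.{u} Λ | ∃ r, X.deleteVert r ∈ S}.IsPWO := by
  refine Set.partiallyWellOrderedOn_iff_exists_lt.2 fun X hX => ?_
  choose r hr using hX
  obtain ⟨m, n, hmn, hlabel, hle⟩ := Set.partiallyWellOrderedOn_iff_exists_lt.1
    ((Set.finite_univ.partiallyWellOrderedOn (r := @Eq Λ)).prod hS)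
    (fun n => ((X n).label (r n), (X n).deleteVert (r n))) fun n => ⟨trivial, hr n⟩
  exact ⟨m, n, hmn, le_of_deleteVert hlabel hle⟩

theorem isPWO_setOf_forall_component_mem {S : Set (LabeledGraph.{u} Λ)} (hS : S.IsPWO) :
    {X : LabeledGraph.{u} Λ | ∀ c, X.component c ∈ S}.IsPWO := by
  refine Set.partiallyWellOrderedOn_iff_exists_lt.2 fun X hX => ?_
  have : ∀ n, Finite (X n).graph.ConnectedComponent := fun n => Quot.finite _
  obtain ⟨m, n, hmn, g, hg, hle⟩ :=
    exists_lt_exists_injective hS (fun n => (X n).component) hX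
  exact ⟨m, n, hmn, le_of_components hg hle⟩

theorem isPWO_setOf_hasTreedepthLE (k : ℕ) (Λ : Type v) [Finite Λ] :
    {X : LabeledGraph.{u} Λ | HasTreedepthLE k X.graph}.IsPWO := by
  induction k generalizing Λ with
  | zero =>
    refine Set.partiallyWellOrderedOn_iff_exists_lt.2 fun X hX => ⟨0, 1, Nat.zero_lt_one, ?_⟩
    have : IsEmpty (X 0).V := hX 0
    exact ⟨⟨Function.Embedding.ofIsEmpty, fun {x} => isEmptyElim x⟩, isEmptyElim⟩
  | succ k ih =>
    exact isPWO_setOf_forall_component_mem (isPWO_setOf_exists_deleteVert_mem (ih (Λ × Prop)))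

end LabeledGraph

/-! ### Weak amalgamation from bounded cores -/

theorem isCofinal_iInter_of_isUpperSet {ι α : Type*} [Finite ι] [Preorder α] {U : ι → Set α}
    (hupper : ∀ i, IsUpperSet (U i)) (hU : ∀ i, IsCofinal (U i)) : IsCofinal (⋂ i, U i) := by
  have key : ∀ t : Set ι, IsCofinal (⋂ i ∈ t, U i) := fun t => by
    induction t, t.toFinite using Set.Finite.induction_on with
    | empty => simp
    | insert _ _ ih =>
      intro x
      obtain ⟨y, hy, hxy⟩ := ih x
      obtain ⟨z, hz, hyz⟩ := hU _ y
      rw [Set.biInter_insert]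
      exact ⟨z, ⟨hz, (isUpperSet_iInter₂ fun i _ => hupper i) hyz hy⟩, hxy.trans hyz⟩
  simpa using key Set.univ

theorem exists_forall_ge_exists_common_ub_of_isPWO {α β : Type*} [Preorder α] [Preorder β]
    {core : α → β} (hcore : ∀ x y, core x ≤ core y → ∃ z, x ≤ z ∧ y ≤ z) {s : Set β} (hs : s.IsPWO)
    {a : α} (ha : ∀ x, a ≤ x → core x ∈ s) :
    ∃ b : α, ∀ x y, b ≤ x → b ≤ y → ∃ z, x ≤ z ∧ y ≤ z := by
  by_contra! hbad
  choose x y hx hy hxy using hbad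
  let chain (n : ℕ) : α := y^[n] a
  have hchain : Monotone chain := monotone_nat_of_le_succ fun n => by
    simpa only [chain, Function.iterate_succ_apply'] using hy (y^[n] a)
  obtain ⟨m, n, hmn, hle⟩ := Set.partiallyWellOrderedOn_iff_exists_lt.1 hs
    (fun n => core (x (chain n))) fun n => ha _ (le_trans (hchain (Nat.zero_le n)) (hx _))
  obtain ⟨z, hmz, hnz⟩ := hcore _ _ hle
  refine hxy (chain m) z hmz (le_trans ?_ hnz)
  calc y (chain m) = chain (m + 1) := (Function.iterate_succ_apply' y m a).symm
    _ ≤ chain n := hchain hmn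
    _ ≤ x (chain n) := hx _

/-- A finite graph in the class `P` extending `A`. Extensions are quasi-ordered by induced
embeddings over `A`. -/
structure Extension (P : ∀ α : Type, SimpleGraph α → Prop) {α : Type} (A : SimpleGraph α) :
    Type 1 where
  V : Type
  [finite : Finite V]
  graph : SimpleGraph V
  mem : P V graph
  embedding : A ↪g graph

namespace Extension

attribute [instance] Extension.finite

variable {P : ∀ α : Type, SimpleGraph α → Prop} {α : Type} {A : SimpleGraph α}

instance : Preorder (Extension P A) where
  le E F := ∃ f : E.graph ↪g F.graph, ∀ a, f (E.embedding a) = F.embedding a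
  le_refl _ := ⟨Embedding.refl, fun _ => rfl⟩
  le_trans _ _ _ := fun ⟨f, hf⟩ ⟨g, hg⟩ => ⟨g.comp f, fun a => (congrArg g (hf a)).trans (hg a)⟩

/-- The vertices of the components that meet `A`. -/
def coreSet (E : Extension P A) : Set E.V :=
  {x | ∃ a, E.graph.Reachable (E.embedding a) x}

/-- The union of the components that meet `A`, each vertex of `A` being labelled by itself. -/
noncomputable def core (E : Extension P A) : LabeledGraph.{0} (Option α) where
  V := E.coreSet
  graph := E.graph.induce E.coreSet
  label x := Function.partialInv E.embedding x

theorem core_label_eq_some {E : Extension P A} {x : E.core.V} {a : α} :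
    E.core.label x = some a ↔ E.embedding a = x.1 :=
  E.embedding.injective.isPartialInv _ _

theorem mem_coreSet_of_reachable {E : Extension P A} {x y : E.V} (h : E.graph.Reachable x y)
    (hx : x ∈ E.coreSet) : y ∈ E.coreSet :=
  let ⟨a, ha⟩ := hx
  ⟨a, ha.trans h⟩

theorem exists_common_ub_of_core_le
    (hP : ∀ (V W : Type) (G : SimpleGraph V) (H : SimpleGraph W), P V G → P W H → P _ (G ⊕g H))
    (E F : Extension P A) (h : E.core ≤ F.core) : ∃ D : Extension P A, E ≤ D ∧ F ≤ D := by
  obtain ⟨f, hf⟩ := h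
  have coreSet_closed : ∀ x y, E.graph.Adj x y → (x ∈ E.coreSet ↔ y ∈ E.coreSet) := fun x y hxy =>
    ⟨mem_coreSet_of_reachable hxy.reachable, mem_coreSet_of_reachable hxy.symm.reachable⟩
  obtain ⟨g, hg⟩ := exists_embedding_sum_of_induce coreSet_closed
    ((Embedding.induce F.coreSet).comp f)
  refine ⟨⟨F.V ⊕ E.V, F.graph ⊕g E.graph, hP _ _ _ _ F.mem E.mem,
    Embedding.sumInl.comp F.embedding⟩, ⟨g, fun a => ?_⟩, Embedding.sumInl, fun _ => rfl⟩
  have ha : E.embedding a ∈ E.coreSet := ⟨a, Reachable.rfl⟩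
  have hlabel : F.core.label (f ⟨_, ha⟩) = some a := (hf _).trans (core_label_eq_some.2 rfl)
  exact (hg _ ha).trans (congrArg Sum.inl (core_label_eq_some.1 hlabel).symm)

theorem hasTreedepthLE_core {E : Extension P A} {k : ℕ}
    (hE : ∀ a, HasShortRoot E.graph (E.embedding a) k) : HasTreedepthLE k E.core.graph := by
  classical
  refine hasTreedepthLE_of_hasShortRoot fun ⟨x, a, hax⟩ => ?_
  obtain ⟨r, har, hr⟩ := hE a
  obtain ⟨w⟩ := hax.symm.trans har
  have hw : ∀ y ∈ w.support, y ∈ E.coreSet := fun y hy =>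
    mem_coreSet_of_reachable (w.takeUntil y hy).reachable ⟨a, hax⟩
  exact ⟨_, (w.induce _ hw).reachable,
    PathsShorter.of_copy (Embedding.induce E.coreSet).toCopy hr⟩

/-- The extensions in which, and in all further extensions of which, the component of the vertex
`a` of `A` has a root starting only paths of bounded length. -/
def boundedAt (P : ∀ α : Type, SimpleGraph α → Prop) (A : SimpleGraph α) (a : α) :
    Set (Extension P A) :=
  {E | ∃ k, ∀ F, E ≤ F → HasShortRoot F.graph (F.embedding a) k}

theorem isUpperSet_boundedAt (a : α) : IsUpperSet (boundedAt P A a) :=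
  fun _ _ hEF ⟨k, hk⟩ => ⟨k, fun D hD => hk D (hEF.trans hD)⟩

theorem exists_forall_core_hasTreedepthLE [Finite α] {E : Extension P A}
    (hE : ∀ a, E ∈ boundedAt P A a) : ∃ k, ∀ F, E ≤ F → HasTreedepthLE k F.core.graph := by
  choose k hk using hE
  obtain ⟨l, hl⟩ := Finite.bddAbove_range k
  exact ⟨l, fun F hF => hasTreedepthLE_core fun a => (hk a F hF).mono (hl ⟨a, rfl⟩)⟩

end Extension

theorem graphWAP_of_isCofinal_boundedAt {P : ∀ α : Type, SimpleGraph α → Prop}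
    (hsum : ∀ (V W : Type) (G : SimpleGraph V) (H : SimpleGraph W), P V G → P W H → P _ (G ⊕g H))
    (hP : ∀ (α : Type) (A : SimpleGraph α) (a : α), IsCofinal (Extension.boundedAt P A a)) :
    GraphWAP P := by
  intro α _ A hA
  obtain ⟨E, hE, -⟩ := isCofinal_iInter_of_isUpperSet Extension.isUpperSet_boundedAt (hP α A)
    ⟨α, A, hA, Embedding.refl⟩
  obtain ⟨k, hk⟩ := Extension.exists_forall_core_hasTreedepthLE (Set.mem_iInter.1 hE)
  obtain ⟨A', hA'⟩ := exists_forall_ge_exists_common_ub_of_isPWO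
    (Extension.exists_common_ub_of_core_le hsum)
    (LabeledGraph.isPWO_setOf_hasTreedepthLE k (Option α)) hk
  refine ⟨A'.V, Fintype.ofFinite _, A'.graph, A'.embedding, A'.mem,
    fun β _ B hB γ _ C hC f g => ?_⟩
  obtain ⟨D, ⟨f', hf'⟩, g', hg'⟩ := hA' ⟨β, B, hB, f.comp A'.embedding⟩
    ⟨γ, C, hC, g.comp A'.embedding⟩ ⟨f, fun _ => rfl⟩ ⟨g, fun _ => rfl⟩
  exact ⟨D.V, Fintype.ofFinite _, D.graph, D.mem, f', g', fun a => (hf' a).trans (hg' a).symm⟩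

/-! ### Weak amalgamation from thin midpoints -/

section Free

variable {V : Type} [Finite V] {N : SimpleGraph V} {n : ℕ} {α : Type} {A : SimpleGraph α}

theorem exists_isPathOn_of_not_pathsShorter {W : Type*} {G : SimpleGraph W} {v : W}
    (hv : ¬ PathsShorter G v (2 * n)) :
    ∃ q, IsPathOn G q (-n) n ∧ G.Reachable v (q 0) := by
  simp only [PathsShorter, not_forall, not_lt] at hv
  obtain ⟨u, w, hw, hlen⟩ := hv
  exact ⟨_, ((isPathOn_getVert hw).comp_add n).mono (by lia) (by lia), (w.take _).reachable⟩

/-- A vertex of `A` that starts a long path in some extension is bounded in the double of that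
extension along its tails. -/
theorem isCofinal_boundedAt_free (hN : N.Preconnected) (hcard : Nat.card V < n)
    (hthin : ∀ (W : Type) (G : SimpleGraph W), N.Free G → HasThinMidpoints G n) (a : α) :
    IsCofinal (Extension.boundedAt (fun _ G => N.Free G) A a) := by
  intro E
  by_cases hE : ∀ F, E ≤ F → PathsShorter F.graph (F.embedding a) (2 * (2 * n))
  · exact ⟨E, ⟨_, fun F hF => ⟨_, Reachable.rfl, hE F hF⟩⟩, le_rfl⟩
  push Not at hE
  obtain ⟨F, hEF, hF⟩ := hE
  obtain ⟨q, hq, hreach⟩ := exists_isPathOn_of_not_pathsShorter hF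
  push_cast at hq
  let ι := doubleEmbedding F.graph {l | IsTailEnd F.graph n l} false
  let D : Extension (fun _ G => N.Free G) A := ⟨F.V × Bool, _,
    doubleAlong_free hN hcard F.mem (hq.mono (by lia) (by lia)), ι.comp F.embedding⟩
  refine ⟨D, ⟨2 * Nat.card F.V + n, fun H ⟨f, hf⟩ => ⟨f (q 0, false), ?_, ?_⟩⟩,
    hEF.trans ⟨ι, fun _ => rfl⟩⟩
  · rw [← hf a]
    exact (hreach.map ι.toHom).map f.toHom
  · exact (hthin _ _ F.mem).pathsShorter_of_doubleAlong (hthin _ _ H.mem) (Nat.zero_lt_of_lt hcard)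
      hq false f

theorem graphWAP_free (hN : N.Preconnected) (hcard : Nat.card V < n)
    (hthin : ∀ (W : Type) (G : SimpleGraph W), N.Free G → HasThinMidpoints G n) :
    GraphWAP fun _ G => N.Free G :=
  graphWAP_of_isCofinal_boundedAt (fun _ _ _ _ => free_sum hN)
    fun _ _ => isCofinal_boundedAt_free hN hcard hthin

end Free

/-- If `N` is a near path (a path, or a path with one extra pendant vertex attached),
then the class of all finite `N`-free graphs has the weak amalgamation property. -/
theorem nearPathFree_wap (V : Type) [Fintype V] (N : SimpleGraph V)
    (hN : (∃ m : ℕ, Nonempty (N ≃g SimpleGraph.pathGraph m)) ∨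
          (∃ (m : ℕ) (k : Fin m), Nonempty (N ≃g nearPath m k))) :
    GraphWAP (fun _ G => ¬ Contains N G) := by
  simp only [contains_iff_isContained]
  rcases hN with ⟨m, ⟨e⟩⟩ | ⟨m, k, ⟨e⟩⟩
  · simp only [isContained_congr_left e]
    exact graphWAP_free (pathGraph_preconnected m) (by simp)
      fun _ _ => hasThinMidpoints_of_pathGraph_free
  · simp only [isContained_congr_left e]
    exact graphWAP_free (nearPath_preconnected m k)
      (by simp only [Nat.card_sum, Nat.card_fin, Nat.card_unique]; lia)
      fun _ _ => hasThinMidpoints_of_nearPath_free
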